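/- Let X be a d-dimensional random vector whose law has a probability density belonging to either 𝒫(d) or 𝒫⁺(d). Then there exists a constant C > 0, depending only on the law of X and on d, such that for every ε ∈ (−1/2, 1/2), if X' = X/(1 + ε), then the Hellinger affinity satisfies ρ(L_X, L_{X'}) ≥ 1 − C·ε². -/

import Mathlib

open MeasureTheory Filter

/-- Hellinger affinity `ρ(μ, ν) = ∫ sqrt(f g) dλ`, computed with the dominating measure
`λ = μ + ν` and the Radon–Nikodym densities `f = dμ/dλ`, `g = dν/dλ`. -/
noncomputable def hellingerAffinity {Ω : Type*} [MeasurableSpace Ω] (μ ν : Measure Ω) : ℝ :=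
  ∫ x, Real.sqrt ((μ.rnDeriv (μ + ν) x).toReal * (ν.rnDeriv (μ + ν) x).toReal) ∂(μ + ν)

open MeasureTheory Filter

/-- `ℝ^d` with the Euclidean norm. -/
abbrev ESp (d : ℕ) := EuclideanSpace ℝ (Fin d)

/-- The open positive orthant `(0,∞)^d`. -/
def orthantOpen (d : ℕ) : Set (ESp d) := {x | ∀ i, 0 < x i}

/-- The closed orthant `[0,∞)^d`. -/
def orthantClosed (d : ℕ) : Set (ESp d) := {x | ∀ i, 0 ≤ x i}

/-- `e^{−V}` is a density in the class `𝒫(d)`: `V` is `C^∞`, `V` and all its derivatives have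
at most polynomial growth at infinity, and `e^V` increases faster than any polynomial
at infinity. -/
structure IsInP (d : ℕ) (V : ESp d → ℝ) : Prop where
  smooth : ContDiff ℝ (⊤ : ℕ∞) V
  polyGrowth : ∀ k : ℕ, ∃ C : ℝ, ∃ p : ℕ, ∀ x, ‖iteratedFDeriv ℝ k V x‖ ≤ C * (1 + ‖x‖) ^ p
  superPoly : ∀ p : ℕ,
    Tendsto (fun x : ESp d => Real.exp (V x) / (1 + ‖x‖) ^ p) (cocompact _) atTop
  isDensity : ∫ x, Real.exp (-V x) = 1

/-- `e^{−V}` is a density in the class `𝒫⁺(d)` on `[0,∞)^d`: `V` is `C^∞` in `(0,∞)^d`,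
`V` and all its derivatives have at most polynomial growth at infinity and extend continuously
to the boundary of `[0,∞)^d`, and `e^V` increases faster than any polynomial at infinity. -/
structure IsInPplus (d : ℕ) (V : ESp d → ℝ) : Prop where
  smooth : ContDiffOn ℝ (⊤ : ℕ∞) V (orthantOpen d)
  derivsExtendPolyGrowth : ∀ k : ℕ,
    ∃ g : ESp d → ContinuousMultilinearMap ℝ (fun _ : Fin k => ESp d) ℝ,
      ContinuousOn g (orthantClosed d) ∧
      (∀ x ∈ orthantOpen d, g x = iteratedFDerivWithin ℝ k V (orthantOpen d) x) ∧
      ∃ C : ℝ, ∃ p : ℕ, ∀ x ∈ orthantClosed d, ‖g x‖ ≤ C * (1 + ‖x‖) ^ p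
  superPoly : ∀ p : ℕ,
    Tendsto (fun x : ESp d => Real.exp (V x) / (1 + ‖x‖) ^ p)
      (cocompact _ ⊓ 𝓟 (orthantClosed d)) atTop
  isDensity : ∫ x in orthantClosed d, Real.exp (-V x) = 1

/-- `μ` is a measure on `ℝ^d` with a probability density belonging to `𝒫(d)`. -/
def HasDensityInP (d : ℕ) (μ : Measure (ESp d)) : Prop :=
  ∃ V, IsInP d V ∧ μ = volume.withDensity fun x => ENNReal.ofReal (Real.exp (-V x))

/-- `μ` is a measure on `[0,∞)^d ⊆ ℝ^d` with a probability density belonging to `𝒫⁺(d)`. -/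
def HasDensityInPplus (d : ℕ) (μ : Measure (ESp d)) : Prop :=
  ∃ V, IsInPplus d V ∧
    μ = (volume.restrict (orthantClosed d)).withDensity fun x => ENNReal.ofReal (Real.exp (-V x))

/-!
Write `c = 1 + ε = e^{2s}`. The Hellinger affinity is invariant under a common dilation, so the
laws of `X` and `X / c` can be replaced by those of `e^s X` and `e^{-s} X`; the affinity then
becomes `∫ exp(-(V(e^s y) + V(e^{-s} y)) / 2) dy`. In this symmetric form the first-order terms in
`s` cancel: `V(e^s y) + V(e^{-s} y) ≤ 2 V(y) + K (1 + ‖y‖)^q s²`, because `t ↦ V(e^t y)` has a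
second derivative of polynomial growth in `y`. From `1 - t ≤ e^{-t}` the affinity is at least
`∫ e^{-V} - s² (K/2) ∫ (1 + ‖y‖)^q e^{-V(y)} dy`, and the last integral is finite since `e^{-V}`
decays faster than any polynomial. The boundary of the orthant is a null set, so both classes of
densities live on open cones, which is all the argument needs.
-/

section HellingerAffinity

variable {α β : Type*} [MeasurableSpace α] [MeasurableSpace β]

lemma hellingerAffinity_nonneg (μ ν : Measure α) : 0 ≤ hellingerAffinity μ ν :=
  integral_nonneg fun _ => Real.sqrt_nonneg _

lemma hellingerAffinity_map {e : α → β} (he : MeasurableEmbedding e) (μ ν : Measure α)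
    [SigmaFinite μ] [SigmaFinite ν] :
    hellingerAffinity (μ.map e) (ν.map e) = hellingerAffinity μ ν := by
  unfold hellingerAffinity
  rw [← Measure.map_add _ _ he.measurable, he.integral_map]
  refine integral_congr_ae ?_
  filter_upwards [he.rnDeriv_map μ (μ + ν), he.rnDeriv_map ν (μ + ν)] with x hμ hν
  rw [hμ, hν]

lemma hellingerAffinity_eq_integral_sqrt_rnDeriv {μ ν κ : Measure α} [SigmaFinite μ]
    [SigmaFinite ν] [SigmaFinite κ] (hμ : μ ≪ κ) (hν : ν ≪ κ) :
    hellingerAffinity μ ν = ∫ x, √((μ.rnDeriv κ x).toReal * (ν.rnDeriv κ x).toReal) ∂κ := by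
  unfold hellingerAffinity
  have hμsum : μ ≪ μ + ν := Measure.AbsolutelyContinuous.rfl.add_right ν
  have hνsum : ν ≪ μ + ν := Measure.AbsolutelyContinuous.rfl.add_right' μ
  rw [← integral_toReal_rnDeriv_mul (hμ.add_left hν)]
  refine integral_congr_ae ?_
  filter_upwards [Measure.rnDeriv_mul_rnDeriv (κ := κ) hμsum,
    Measure.rnDeriv_mul_rnDeriv (κ := κ) hνsum] with x hμx hνx
  have hr : 0 ≤ ((μ + ν).rnDeriv κ x).toReal := ENNReal.toReal_nonneg
  rw [← hμx, ← hνx, Pi.mul_apply, Pi.mul_apply, ENNReal.toReal_mul, ENNReal.toReal_mul,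
    mul_mul_mul_comm, Real.sqrt_mul' _ (mul_self_nonneg _), Real.sqrt_mul_self hr, mul_comm]

lemma hellingerAffinity_withDensity {κ : Measure α} [SigmaFinite κ] {f g : α → ℝ}
    (hf : AEMeasurable f κ) (hg : AEMeasurable g κ) (hf0 : 0 ≤ f) (hg0 : 0 ≤ g) :
    hellingerAffinity (κ.withDensity fun x => ENNReal.ofReal (f x))
      (κ.withDensity fun x => ENNReal.ofReal (g x)) = ∫ x, √(f x * g x) ∂κ := by
  rw [hellingerAffinity_eq_integral_sqrt_rnDeriv (withDensity_absolutelyContinuous _ _)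
    (withDensity_absolutelyContinuous _ _)]
  refine integral_congr_ae ?_
  filter_upwards [Measure.rnDeriv_withDensity₀ κ hf.ennreal_ofReal,
    Measure.rnDeriv_withDensity₀ κ hg.ennreal_ofReal] with x hfx hgx
  rw [hfx, hgx, ENNReal.toReal_ofReal (hf0 x), ENNReal.toReal_ofReal (hg0 x)]

lemma withDensity_ofReal_real_univ {κ : Measure α} {f : α → ℝ} (hf : AEStronglyMeasurable f κ)
    (hf0 : 0 ≤ f) : (κ.withDensity fun x => ENNReal.ofReal (f x)).real Set.univ = ∫ x, f x ∂κ := by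
  rw [measureReal_def, withDensity_apply _ MeasurableSet.univ, Measure.restrict_univ,
    integral_eq_lintegral_of_nonneg_ae (ae_of_all _ hf0) hf]

lemma map_withDensity_measurableEquiv (e : α ≃ᵐ β) (κ : Measure α) (f : α → ENNReal) :
    (κ.withDensity f).map e = (κ.map e).withDensity (f ∘ e.symm) := by
  ext A hA
  rw [e.map_apply, withDensity_apply _ (e.measurable hA), withDensity_apply _ hA, e.restrict_map,
    lintegral_map_equiv]
  simp only [Function.comp_apply, MeasurableEquiv.symm_apply_apply]

lemma integrable_sqrt_mul {κ : Measure α} {f g : α → ℝ} (hf : Integrable f κ)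
    (hg : Integrable g κ) : Integrable (fun x => √(f x * g x)) κ := by
  refine (hf.abs.add hg.abs).mono'
    (Real.continuous_sqrt.comp_aestronglyMeasurable (hf.1.mul hg.1)) (ae_of_all _ fun x => ?_)
  rw [Real.norm_of_nonneg (Real.sqrt_nonneg _), Pi.add_apply, Real.sqrt_le_left (by positivity)]
  calc f x * g x ≤ |f x| * |g x| := (le_abs_self _).trans (abs_mul _ _).le
    _ ≤ (|f x| + |g x|) ^ 2 := by nlinarith [abs_nonneg (f x), abs_nonneg (g x)]

end HellingerAffinity

section RealInequalities

lemma add_le_two_mul_add_of_second_deriv_le {D : Set ℝ} (hD : Convex ℝ D) {φ φ' φ'' : ℝ → ℝ}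
    {M : ℝ} (h₁ : ∀ t ∈ D, HasDerivAt φ (φ' t) t) (h₂ : ∀ t ∈ D, HasDerivAt φ' (φ'' t) t)
    (hM : ∀ t ∈ D, φ'' t ≤ M) {x s : ℝ} (hl : x - s ∈ D) (hr : x + s ∈ D) :
    φ (x + s) + φ (x - s) ≤ 2 * φ x + M * s ^ 2 := by
  have hconc : ConcaveOn ℝ D fun t => φ t - M / 2 * t ^ 2 := by
    refine concaveOn_of_hasDerivWithinAt2_nonpos (f' := fun t => φ' t - M * t)
      (f'' := fun t => φ'' t - M) hD (fun t ht => ?_) (fun t ht => ?_) (fun t ht => ?_)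
      fun t ht => sub_nonpos.2 (hM t (interior_subset ht))
    · exact ((h₁ t ht).continuousAt.sub (by fun_prop)).continuousWithinAt
    · refine ((h₁ t (interior_subset ht)).sub ?_).hasDerivWithinAt
      exact ((hasDerivAt_pow 2 t).const_mul (M / 2)).congr_deriv (by norm_num; ring)
    · refine ((h₂ t (interior_subset ht)).sub ?_).hasDerivWithinAt
      simpa using (hasDerivAt_id t).const_mul M
  have hmid := hconc.2 hr hl (by norm_num : (0 : ℝ) ≤ 1 / 2) (by norm_num : (0 : ℝ) ≤ 1 / 2)
    (by norm_num)
  have hx : (1 / 2 : ℝ) • (x + s) + (1 / 2 : ℝ) • (x - s) = x := by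
    simp only [smul_eq_mul]; ring
  rw [hx] at hmid
  simp only [smul_eq_mul] at hmid
  linarith

lemma exp_neg_mul_one_sub_le_sqrt {a b v m : ℝ} (h : a + b ≤ 2 * v + 2 * m) :
    Real.exp (-v) * (1 - m) ≤ √(Real.exp (-a) * Real.exp (-b)) :=
  calc Real.exp (-v) * (1 - m) ≤ Real.exp (-v) * Real.exp (-m) := by
        gcongr; exact Real.one_sub_le_exp_neg m
    _ = Real.exp (-v + -m) := (Real.exp_add _ _).symm
    _ ≤ Real.exp ((-a + -b) / 2) := Real.exp_le_exp.2 (by linarith)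
    _ = √(Real.exp (-a) * Real.exp (-b)) := by rw [Real.exp_half, Real.exp_add]

lemma abs_log_one_add_le {ε : ℝ} (hε : -(1 / 2) ≤ ε) : |Real.log (1 + ε)| ≤ 2 * |ε| := by
  have hpos : 0 < 1 + ε := by linarith
  have hup : Real.log (1 + ε) ≤ ε := by linarith [Real.log_le_sub_one_of_pos hpos]
  have hlow : ε / (1 + ε) ≤ Real.log (1 + ε) := by
    calc ε / (1 + ε) = 1 - (1 + ε)⁻¹ := by field_simp; ring
      _ ≤ Real.log (1 + ε) := Real.one_sub_inv_le_log_of_pos hpos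
  have hdiv : |ε / (1 + ε)| ≤ 2 * |ε| := by
    rw [abs_div, abs_of_pos hpos, div_le_iff₀ hpos]
    nlinarith [abs_nonneg ε]
  exact abs_le.2 ⟨(abs_le.1 hdiv).1.trans hlow, by linarith [le_abs_self ε, abs_nonneg ε]⟩

end RealInequalities

/-- Cones with apex `0`, which need be neither convex nor contain the apex: the supports to which
the dilation argument applies. -/
def IsCone {E : Type*} [SMul ℝ E] (S : Set E) : Prop := ∀ c : ℝ, 0 < c → ∀ x ∈ S, c • x ∈ S

lemma IsCone.preimage_smul {E : Type*} [MulAction ℝ E] {S : Set E} (hS : IsCone S) {c : ℝ}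
    (hc : 0 < c) : (c • · : E → E) ⁻¹' S = S := by
  ext x
  refine ⟨fun hx => ?_, hS c hc x⟩
  simpa only [inv_smul_smul₀ hc.ne'] using hS c⁻¹ (inv_pos.2 hc) _ hx

section PolynomialGrowth

variable {E F : Type*} [NormedAddCommGroup E] [NormedAddCommGroup F] {S : Set E}

/-- At most polynomial growth of `f` along `S`, in the form used to define `𝒫(d)` and `𝒫⁺(d)`. -/
def IsPolyBoundedOn (f : E → F) (S : Set E) : Prop :=
  ∃ C : ℝ, ∃ p : ℕ, ∀ x ∈ S, ‖f x‖ ≤ C * (1 + ‖x‖) ^ p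

namespace IsPolyBoundedOn

lemma exists_nonneg {f : E → F} (hf : IsPolyBoundedOn f S) :
    ∃ C : ℝ, 0 ≤ C ∧ ∃ p : ℕ, ∀ x ∈ S, ‖f x‖ ≤ C * (1 + ‖x‖) ^ p := by
  obtain ⟨C, p, hC⟩ := hf
  refine ⟨|C|, abs_nonneg C, p, fun x hx => (hC x hx).trans ?_⟩
  gcongr
  exact le_abs_self C

lemma add {f g : E → F} (hf : IsPolyBoundedOn f S) (hg : IsPolyBoundedOn g S) :
    IsPolyBoundedOn (fun x => f x + g x) S := by
  obtain ⟨C, hC0, p, hC⟩ := hf.exists_nonneg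
  obtain ⟨D, hD0, q, hD⟩ := hg.exists_nonneg
  refine ⟨C + D, max p q, fun x hx => ?_⟩
  have h1 : 1 ≤ 1 + ‖x‖ := by simp
  calc ‖f x + g x‖ ≤ C * (1 + ‖x‖) ^ p + D * (1 + ‖x‖) ^ q := norm_add_le_of_le (hC x hx) (hD x hx)
    _ ≤ C * (1 + ‖x‖) ^ max p q + D * (1 + ‖x‖) ^ max p q := by
      gcongr
      exacts [le_max_left p q, le_max_right p q]
    _ = (C + D) * (1 + ‖x‖) ^ max p q := (add_mul _ _ _).symm

end IsPolyBoundedOn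

lemma exists_one_add_norm_pow_mul_exp_neg_le {V : E → ℝ} (hV : IsPolyBoundedOn V S) {q : ℕ}
    (hq : Tendsto (fun x => Real.exp (V x) / (1 + ‖x‖) ^ q) (cocompact E ⊓ 𝓟 S) atTop) :
    ∃ K : ℝ, ∀ x ∈ S, (1 + ‖x‖) ^ q * Real.exp (-V x) ≤ K := by
  obtain ⟨C, hC0, p, hC⟩ := hV.exists_nonneg
  obtain ⟨T, hT, hTS⟩ :=
    mem_cocompact.1 (eventually_inf_principal.1 (hq.eventually_ge_atTop 1))
  obtain ⟨R, hR0, hR⟩ := hT.isBounded.exists_pos_norm_le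
  refine ⟨max 1 ((1 + R) ^ q * Real.exp (C * (1 + R) ^ p)), fun x hx => ?_⟩
  by_cases hxT : x ∈ T
  · have hxR : ‖x‖ ≤ R := hR x hxT
    have hVx : -V x ≤ C * (1 + R) ^ p := calc
      -V x ≤ C * (1 + ‖x‖) ^ p := (neg_le_abs _).trans (hC x hx)
      _ ≤ C * (1 + R) ^ p := by gcongr
    refine le_max_of_le_right ?_
    gcongr
  · have hge : 1 ≤ Real.exp (V x) / (1 + ‖x‖) ^ q := hTS hxT hx
    rw [one_le_div₀ (by positivity)] at hge
    rw [Real.exp_neg, ← div_eq_mul_inv]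
    exact le_max_of_le_left ((div_le_one (Real.exp_pos _)).2 hge)

variable [NormedSpace ℝ E]

namespace IsPolyBoundedOn

lemma exists_norm_comp_smul_le {f : E → F} (hf : IsPolyBoundedOn f S) (hS : IsCone S) (R : ℝ) :
    ∃ K : ℝ, 0 ≤ K ∧ ∃ q : ℕ, ∀ y ∈ S, ∀ c : ℝ, 0 < c → c ≤ R →
      ‖f (c • y)‖ ≤ K * (1 + ‖y‖) ^ q := by
  obtain ⟨C, hC0, p, hC⟩ := hf.exists_nonneg
  refine ⟨C * (1 + |R|) ^ p, by positivity, p, fun y hy c hc hcR => ?_⟩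
  have hcy : 1 + ‖c • y‖ ≤ (1 + |R|) * (1 + ‖y‖) := by
    have : c * ‖y‖ ≤ |R| * ‖y‖ := by gcongr; exact hcR.trans (le_abs_self R)
    rw [norm_smul, Real.norm_of_nonneg hc.le]
    linarith [abs_nonneg R, norm_nonneg y]
  calc ‖f (c • y)‖ ≤ C * (1 + ‖c • y‖) ^ p := hC _ (hS c hc y hy)
    _ ≤ C * ((1 + |R|) * (1 + ‖y‖)) ^ p := by gcongr
    _ = C * (1 + |R|) ^ p * (1 + ‖y‖) ^ p := by rw [mul_pow, mul_assoc]

lemma clm_apply_self [NormedSpace ℝ F] {L : E → E →L[ℝ] F} (hL : IsPolyBoundedOn L S) :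
    IsPolyBoundedOn (fun x => L x x) S := by
  obtain ⟨C, hC0, p, hC⟩ := hL.exists_nonneg
  refine ⟨C, p + 1, fun x hx => ?_⟩
  calc ‖L x x‖ ≤ ‖L x‖ * ‖x‖ := (L x).le_opNorm x
    _ ≤ C * (1 + ‖x‖) ^ p * (1 + ‖x‖) := by
      gcongr
      exacts [hC x hx, by simp]
    _ = C * (1 + ‖x‖) ^ (p + 1) := by rw [pow_succ, mul_assoc]

end IsPolyBoundedOn

lemma hasDerivAt_comp_exp_smul [NormedSpace ℝ F] {f : E → F} {y : E} {t : ℝ}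
    (hf : DifferentiableAt ℝ f (Real.exp t • y)) :
    HasDerivAt (fun t => f (Real.exp t • y)) (fderiv ℝ f (Real.exp t • y) (Real.exp t • y)) t :=
  hf.hasFDerivAt.comp_hasDerivAt t ((Real.hasDerivAt_exp t).smul_const y)

lemma exists_add_comp_exp_smul_le {V : E → ℝ} (hSo : IsOpen S) (hS : IsCone S)
    (hV : ContDiffOn ℝ 2 V S) (h₁ : IsPolyBoundedOn (fderiv ℝ V) S)
    (h₂ : IsPolyBoundedOn (fderiv ℝ (fderiv ℝ V)) S) :
    ∃ K : ℝ, 0 ≤ K ∧ ∃ q : ℕ, ∀ y ∈ S, ∀ s : ℝ, |s| ≤ 1 →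
      V (Real.exp s • y) + V (Real.exp (-s) • y) ≤ 2 * V y + K * (1 + ‖y‖) ^ q * s ^ 2 := by
  have h := h₂.clm_apply_self.clm_apply_self.add h₁.clm_apply_self
  obtain ⟨K, hK0, q, hK⟩ := h.exists_norm_comp_smul_le hS (Real.exp 1)
  refine ⟨K, hK0, q, fun y hy s hs => ?_⟩
  have hnhds (t : ℝ) : S ∈ nhds (Real.exp t • y) := hSo.mem_nhds (hS _ (Real.exp_pos t) y hy)
  have hV' : ContDiffOn ℝ 1 (fderiv ℝ V) S := hV.fderiv_of_isOpen hSo (by norm_num)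
  have hφ' (t : ℝ) := hasDerivAt_comp_exp_smul
    ((hV.differentiableOn two_ne_zero).differentiableAt (hnhds t))
  have hφ'' (t : ℝ) := (hasDerivAt_comp_exp_smul
    ((hV'.differentiableOn one_ne_zero).differentiableAt (hnhds t))).clm_apply
      ((Real.hasDerivAt_exp t).smul_const y)
  have hs' := abs_le.1 hs
  have key := add_le_two_mul_add_of_second_deriv_le (convex_Icc (-1) 1) (x := 0) (s := s)
    (M := K * (1 + ‖y‖) ^ q) (fun t _ => hφ' t) (fun t _ => hφ'' t)
    (fun t ht => (le_abs_self _).trans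
      (hK y hy _ (Real.exp_pos t) (Real.exp_le_exp.2 ht.2)))
    ⟨by linarith, by linarith⟩ ⟨by linarith, by linarith⟩
  simpa only [zero_add, zero_sub, Real.exp_zero, one_smul] using key

end PolynomialGrowth

section Dilations

variable {E : Type*} [NormedAddCommGroup E] [NormedSpace ℝ E] [FiniteDimensional ℝ E]
  [MeasurableSpace E] [BorelSpace E] {S : Set E}

open Module (finrank)

lemma integrableOn_of_one_add_norm_pow_mul_le (ν : Measure E) [ν.IsAddHaarMeasure]
    (hS : MeasurableSet S) {f : E → ℝ} (hf : AEStronglyMeasurable f (ν.restrict S)) {K : ℝ}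
    (hK : ∀ x ∈ S, (1 + ‖x‖) ^ (finrank ℝ E + 1) * ‖f x‖ ≤ K) : IntegrableOn f S ν := by
  have hint : Integrable (fun x : E => K * (1 + ‖x‖) ^ (-((finrank ℝ E + 1 : ℕ) : ℝ))) ν :=
    (integrable_one_add_norm (by simp)).const_mul K
  refine hint.integrableOn.mono' hf ?_
  filter_upwards [ae_restrict_mem hS] with x hx
  rw [Real.rpow_neg (by positivity), Real.rpow_natCast, ← div_eq_mul_inv,
    le_div_iff₀' (by positivity)]
  exact hK x hx

variable (ν : Measure E) [ν.IsAddHaarMeasure] {f : E → ℝ} {c : ℝ}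

lemma map_smul_restrict_cone (hS : IsCone S) (hc : 0 < c) :
    (ν.restrict S).map (c • ·) = ENNReal.ofReal (c ^ finrank ℝ E)⁻¹ • ν.restrict S := by
  have hemb : MeasurableEmbedding (c • · : E → E) := measurableEmbedding_const_smul₀ hc.ne'
  conv_lhs => rw [← hS.preimage_smul hc]
  rw [← hemb.restrict_map, Measure.map_addHaar_smul ν hc.ne', Measure.restrict_smul,
    abs_of_pos (by positivity)]

lemma aemeasurable_comp_smul (hS : IsCone S) (hf : AEMeasurable f (ν.restrict S)) (hc : 0 < c) :
    AEMeasurable (fun x => f (c • x)) (ν.restrict S) := by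
  refine AEMeasurable.comp_measurable ?_ (measurable_const_smul c)
  rw [map_smul_restrict_cone ν hS hc]
  exact hf.smul_measure _

variable {ν} in
lemma integrableOn_comp_smul (hS : IsCone S) (hf : IntegrableOn f S ν) (hc : 0 < c) :
    IntegrableOn (fun x => f (c • x)) S ν := by
  refine Integrable.comp_measurable ?_ (measurable_const_smul c)
  rw [map_smul_restrict_cone ν hS hc]
  exact hf.smul_measure ENNReal.ofReal_ne_top

lemma map_smul_withDensity_cone (hS : IsCone S) (f : E → ℝ) (hc : 0 < c) :
    ((ν.restrict S).withDensity fun x => ENNReal.ofReal (f x)).map (c • ·)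
      = (ν.restrict S).withDensity
          fun x => ENNReal.ofReal ((c ^ finrank ℝ E)⁻¹ * f (c⁻¹ • x)) := by
  have hmap := map_withDensity_measurableEquiv (MeasurableEquiv.smul₀ c hc.ne') (ν.restrict S)
    fun x => ENNReal.ofReal (f x)
  simp only [MeasurableEquiv.coe_smul₀, MeasurableEquiv.symm_smul₀] at hmap
  rw [hmap, map_smul_restrict_cone ν hS hc, withDensity_smul_measure,
    ← withDensity_smul' _ _ ENNReal.ofReal_ne_top]
  simp only [ENNReal.ofReal_mul (inv_nonneg.2 (pow_nonneg hc.le _))]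
  rfl

lemma hellingerAffinity_map_inv_sq_smul (hS : IsCone S) (hf : AEMeasurable f (ν.restrict S))
    (hf0 : 0 ≤ f) (hc : 0 < c) :
    hellingerAffinity ((ν.restrict S).withDensity fun x => ENNReal.ofReal (f x))
        (((ν.restrict S).withDensity fun x => ENNReal.ofReal (f x)).map ((c ^ 2)⁻¹ • ·))
      = ∫ y in S, √(f (c⁻¹ • y) * f (c • y)) ∂ν := by
  set μ := (ν.restrict S).withDensity fun x => ENNReal.ofReal (f x) with hμ
  have hci : 0 < c⁻¹ := inv_pos.2 hc
  have hsf : SigmaFinite (μ.map ((c ^ 2)⁻¹ • ·)) :=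
    (measurableEmbedding_const_smul₀ (by positivity)).sigmaFinite_map
  have hcomp : (c • · : E → E) ∘ ((c ^ 2)⁻¹ • ·) = (c⁻¹ • ·) := by
    ext1 x
    rw [Function.comp_apply, smul_smul, pow_two, mul_inv, mul_inv_cancel_left₀ hc.ne']
  rw [← hellingerAffinity_map (measurableEmbedding_const_smul₀ hc.ne'),
    Measure.map_map (measurable_const_smul _) (measurable_const_smul _), hcomp, hμ,
    map_smul_withDensity_cone ν hS f hc, map_smul_withDensity_cone ν hS f hci, inv_inv,
    hellingerAffinity_withDensity ((aemeasurable_comp_smul ν hS hf hci).const_mul _)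
      ((aemeasurable_comp_smul ν hS hf hc).const_mul _)
      (fun x => mul_nonneg (by positivity) (hf0 _)) fun x => mul_nonneg (by positivity) (hf0 _)]
  congr 1 with x
  rw [mul_mul_mul_comm, inv_pow, inv_inv, inv_mul_cancel₀ (by positivity), one_mul]

end Dilations

section TemperedPotential

variable {E : Type*} [NormedAddCommGroup E] [NormedSpace ℝ E]

/-- The common part of the classes `𝒫(d)` and `𝒫⁺(d)`: a `C²` potential `V` on an open cone `S`
whose derivatives up to order two grow at most polynomially and for which `e^V` grows faster than
any polynomial. Normalization of `e^{-V}` is not part of the definition. -/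
structure IsTemperedPotential (V : E → ℝ) (S : Set E) : Prop where
  isOpen : IsOpen S
  isCone : IsCone S
  contDiffOn : ContDiffOn ℝ 2 V S
  polyBounded : ∀ k ≤ 2, IsPolyBoundedOn (iteratedFDeriv ℝ k V) S
  superPoly : ∀ p : ℕ,
    Tendsto (fun x => Real.exp (V x) / (1 + ‖x‖) ^ p) (cocompact E ⊓ 𝓟 S) atTop

namespace IsTemperedPotential

variable {V : E → ℝ} {S : Set E}

lemma isPolyBoundedOn (hV : IsTemperedPotential V S) : IsPolyBoundedOn V S := by
  simpa only [IsPolyBoundedOn, norm_iteratedFDeriv_zero] using hV.polyBounded 0 zero_le_two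

lemma isPolyBoundedOn_fderiv (hV : IsTemperedPotential V S) :
    IsPolyBoundedOn (fderiv ℝ V) S := by
  simpa only [IsPolyBoundedOn, norm_iteratedFDeriv_one] using hV.polyBounded 1 one_le_two

lemma isPolyBoundedOn_fderiv_fderiv (hV : IsTemperedPotential V S) :
    IsPolyBoundedOn (fderiv ℝ (fderiv ℝ V)) S := by
  simpa only [IsPolyBoundedOn, ← norm_iteratedFDeriv_fderiv, norm_iteratedFDeriv_zero]
    using hV.polyBounded 2 le_rfl

variable [MeasurableSpace E] [BorelSpace E] (ν : Measure E)

lemma aestronglyMeasurable_exp_neg (hV : IsTemperedPotential V S) :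
    AEStronglyMeasurable (fun x => Real.exp (-V x)) (ν.restrict S) :=
  hV.contDiffOn.continuousOn.neg.rexp.aestronglyMeasurable hV.isOpen.measurableSet

variable [FiniteDimensional ℝ E] [ν.IsAddHaarMeasure]

lemma integrableOn_one_add_norm_pow_mul_exp_neg (hV : IsTemperedPotential V S) (q : ℕ) :
    IntegrableOn (fun x => (1 + ‖x‖) ^ q * Real.exp (-V x)) S ν := by
  obtain ⟨K, hK⟩ := exists_one_add_norm_pow_mul_exp_neg_le hV.isPolyBoundedOn
    (hV.superPoly (Module.finrank ℝ E + 1 + q))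
  have hmeas : AEStronglyMeasurable (fun x : E => (1 + ‖x‖) ^ q) (ν.restrict S) :=
    Continuous.aestronglyMeasurable (by fun_prop)
  refine integrableOn_of_one_add_norm_pow_mul_le ν hV.isOpen.measurableSet (K := K)
    (hmeas.mul (hV.aestronglyMeasurable_exp_neg ν)) fun x hx => ?_
  rw [Real.norm_of_nonneg (by positivity), ← mul_assoc, ← pow_add]
  exact hK x hx

lemma exists_integral_sub_le_integral_sqrt (hV : IsTemperedPotential V S) :
    ∃ C : ℝ, 0 ≤ C ∧ ∀ s : ℝ, |s| ≤ 1 →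
      ∫ x in S, Real.exp (-V x) ∂ν - C * s ^ 2 ≤
        ∫ y in S, √(Real.exp (-V ((Real.exp s)⁻¹ • y)) * Real.exp (-V (Real.exp s • y))) ∂ν := by
  obtain ⟨K, hK0, q, hK⟩ := exists_add_comp_exp_smul_le hV.isOpen hV.isCone hV.contDiffOn
    hV.isPolyBoundedOn_fderiv hV.isPolyBoundedOn_fderiv_fderiv
  have hq := hV.integrableOn_one_add_norm_pow_mul_exp_neg ν q
  have hexp : IntegrableOn (fun x => Real.exp (-V x)) S ν := by
    simpa only [pow_zero, one_mul] using hV.integrableOn_one_add_norm_pow_mul_exp_neg ν 0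
  have hJ : 0 ≤ ∫ x in S, (1 + ‖x‖) ^ q * Real.exp (-V x) ∂ν :=
    integral_nonneg fun x => by positivity
  refine ⟨K / 2 * ∫ x in S, (1 + ‖x‖) ^ q * Real.exp (-V x) ∂ν, mul_nonneg (by positivity) hJ,
    fun s hs => ?_⟩
  have hsqrt := integrable_sqrt_mul
    (integrableOn_comp_smul hV.isCone hexp (inv_pos.2 (Real.exp_pos s)))
    (integrableOn_comp_smul hV.isCone hexp (Real.exp_pos s))
  calc _ = ∫ y in S, (Real.exp (-V y)
          - K / 2 * s ^ 2 * ((1 + ‖y‖) ^ q * Real.exp (-V y))) ∂ν := by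
        rw [integral_sub hexp (hq.const_mul _), integral_const_mul, mul_right_comm]
    _ ≤ _ := setIntegral_mono_on (hexp.sub (hq.const_mul _)) hsqrt hV.isOpen.measurableSet
        fun y hy => ?_
  calc _ = Real.exp (-V y) * (1 - K / 2 * (1 + ‖y‖) ^ q * s ^ 2) := by ring
    _ ≤ _ := exp_neg_mul_one_sub_le_sqrt ?_
  rw [← Real.exp_neg]
  linarith [hK y hy s hs]

end IsTemperedPotential

/-- `μ` has a density `e^{-V}` with respect to `ν`, supported on an open cone, with `V` a tempered
potential there; this covers both `𝒫(d)` and `𝒫⁺(d)`. -/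
def HasTemperedDensity [MeasurableSpace E] (ν μ : Measure E) : Prop :=
  ∃ V S, IsTemperedPotential V S ∧
    μ = (ν.restrict S).withDensity fun x => ENNReal.ofReal (Real.exp (-V x))

lemma HasTemperedDensity.exists_one_sub_mul_log_sq_le [FiniteDimensional ℝ E]
    [MeasurableSpace E] [BorelSpace E] {ν μ : Measure E} [ν.IsAddHaarMeasure]
    [IsProbabilityMeasure μ] (hμ : HasTemperedDensity ν μ) :
    ∃ C : ℝ, 0 ≤ C ∧ ∀ c : ℝ, 0 < c → |Real.log c| ≤ 2 →
      1 - C * Real.log c ^ 2 ≤ hellingerAffinity μ (μ.map (c⁻¹ • ·)) := by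
  obtain ⟨V, S, hV, hdens⟩ := hμ
  obtain ⟨C, hC0, hC⟩ := hV.exists_integral_sub_le_integral_sqrt ν
  have hmeas := hV.aestronglyMeasurable_exp_neg ν
  have hone : ∫ x in S, Real.exp (-V x) ∂ν = 1 := by
    rw [← withDensity_ofReal_real_univ hmeas fun x => (Real.exp_pos _).le, ← hdens, probReal_univ]
  refine ⟨C / 4, by positivity, fun c hc hlog => ?_⟩
  have hs : |Real.log c / 2| ≤ 1 := by
    rw [abs_div, abs_two]
    linarith
  have hsq : Real.exp (Real.log c / 2) ^ 2 = c := by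
    rw [Real.exp_half, Real.sq_sqrt (Real.exp_pos _).le, Real.exp_log hc]
  calc 1 - C / 4 * Real.log c ^ 2
      = ∫ x in S, Real.exp (-V x) ∂ν - C * (Real.log c / 2) ^ 2 := by rw [hone]; ring
    _ ≤ _ := hC _ hs
    _ = hellingerAffinity μ (μ.map (c⁻¹ • ·)) := by
      rw [← hellingerAffinity_map_inv_sq_smul ν hV.isCone hmeas.aemeasurable
        (fun x => (Real.exp_pos _).le) (Real.exp_pos _), hsq, ← hdens]

end TemperedPotential

lemma HasDensityInP.hasTemperedDensity {d : ℕ} {μ : Measure (ESp d)} (h : HasDensityInP d μ) :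
    HasTemperedDensity volume μ := by
  obtain ⟨V, hV, hμ⟩ := h
  refine ⟨V, Set.univ, ⟨isOpen_univ, fun _ _ _ _ => trivial, ?_, fun k _ => ?_, ?_⟩, ?_⟩
  · exact (contDiff_infty.1 hV.smooth 2).contDiffOn
  · simpa only [IsPolyBoundedOn, Set.mem_univ, forall_const] using hV.polyGrowth k
  · simpa only [principal_univ, inf_top_eq] using hV.superPoly
  · rwa [Measure.restrict_univ]

lemma isOpen_orthantOpen (d : ℕ) : IsOpen (orthantOpen d) := by
  simp only [orthantOpen, Set.ofPred_forall]
  exact isOpen_iInter_of_finite fun i => isOpen_lt continuous_const (by fun_prop)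

lemma isCone_orthantOpen (d : ℕ) : IsCone (orthantOpen d) :=
  fun _ hc _ hx i => mul_pos hc (hx i)

lemma orthantOpen_subset_orthantClosed (d : ℕ) : orthantOpen d ⊆ orthantClosed d :=
  fun _ hx i => (hx i).le

lemma orthantOpen_ae_eq_orthantClosed (d : ℕ) : orthantOpen d =ᵐ[volume] orthantClosed d := by
  have hpi : Set.univ.pi (fun _ : Fin d => Set.Ioi (0 : ℝ)) =ᵐ[volume] Set.Ici 0 :=
    Measure.univ_pi_Ioi_ae_eq_Ici
  have hopen : orthantOpen d = WithLp.ofLp ⁻¹' Set.univ.pi fun _ => Set.Ioi 0 := by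
    ext x
    simp [orthantOpen]
  rw [hopen]
  exact (PiLp.volume_preserving_ofLp (Fin d)).quasiMeasurePreserving.preimage_ae_eq hpi

lemma HasDensityInPplus.hasTemperedDensity {d : ℕ} {μ : Measure (ESp d)}
    (h : HasDensityInPplus d μ) : HasTemperedDensity volume μ := by
  obtain ⟨V, hV, hμ⟩ := h
  refine ⟨V, orthantOpen d, ⟨isOpen_orthantOpen d, isCone_orthantOpen d, ?_, fun k _ => ?_,
    fun p => ?_⟩, ?_⟩
  · exact contDiffOn_infty.1 hV.smooth 2
  · obtain ⟨g, -, hg, C, p, hC⟩ := hV.derivsExtendPolyGrowth k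
    refine ⟨C, p, fun x hx => ?_⟩
    rw [← iteratedFDerivWithin_of_isOpen k (isOpen_orthantOpen d) hx, ← hg x hx]
    exact hC x (orthantOpen_subset_orthantClosed d hx)
  · exact (hV.superPoly p).mono_left
      (inf_le_inf_left _ (principal_mono.2 (orthantOpen_subset_orthantClosed d)))
  · rwa [Measure.restrict_congr_set (orthantOpen_ae_eq_orthantClosed d)]

theorem stmt3_general {Ω E : Type*} [MeasurableSpace Ω] [NormedAddCommGroup E] [NormedSpace ℝ E]
    [FiniteDimensional ℝ E] [MeasurableSpace E] [BorelSpace E] {ν : Measure E}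
    [ν.IsAddHaarMeasure] {P : Measure Ω} [IsProbabilityMeasure P] {X : Ω → E}
    (hX : AEMeasurable X P) (hlaw : HasTemperedDensity ν (P.map X)) :
    ∃ C > (0 : ℝ), ∀ ε : ℝ, -1 < ε →
      1 - C * ε ^ 2 ≤ hellingerAffinity (P.map X) (P.map fun ω => (1 + ε)⁻¹ • X ω) := by
  have := Measure.isProbabilityMeasure_map hX
  obtain ⟨C, hC0, hC⟩ := hlaw.exists_one_sub_mul_log_sq_le
  refine ⟨4 * C + 4, by positivity, fun ε hε => ?_⟩
  rcases le_or_gt (1 / 2) |ε| with hlarge | hsmall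
  · have hsq : (1 / 2) ^ 2 ≤ ε ^ 2 := by
      rw [← sq_abs ε]
      gcongr
    nlinarith [hellingerAffinity_nonneg (P.map X) (P.map fun ω => (1 + ε)⁻¹ • X ω)]
  · have hlog : |Real.log (1 + ε)| ≤ 2 * |ε| := abs_log_one_add_le (abs_lt.1 hsmall).1.le
    have hlog_sq : Real.log (1 + ε) ^ 2 ≤ 4 * ε ^ 2 := by
      rw [← sq_abs, ← sq_abs ε]
      nlinarith [abs_nonneg (Real.log (1 + ε))]
    have hmap : P.map (fun ω => (1 + ε)⁻¹ • X ω) = (P.map X).map ((1 + ε)⁻¹ • ·) :=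
      (AEMeasurable.map_map_of_aemeasurable (measurable_const_smul _).aemeasurable hX).symm
    calc 1 - (4 * C + 4) * ε ^ 2 ≤ 1 - C * Real.log (1 + ε) ^ 2 := by
          nlinarith [mul_le_mul_of_nonneg_left hlog_sq hC0]
      _ ≤ hellingerAffinity (P.map X) (P.map fun ω => (1 + ε)⁻¹ • X ω) := by
          rw [hmap]
          exact hC _ (by linarith) (by linarith)

/-- Let `X` be a `d`-dimensional random vector whose law has a density in `𝒫(d)` or `𝒫⁺(d)`.
Then there is `C > 0` depending only on the law of `X` and `d` such that for every
`ε ∈ (−1/2, 1/2)`, with `X' = X/(1+ε)`, one has `ρ(L_X, L_{X'}) ≥ 1 − C ε²`. -/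
theorem stmt3 {Ω : Type*} [MeasurableSpace Ω] (P : Measure Ω) [IsProbabilityMeasure P]
    (d : ℕ) (X : Ω → ESp d) (hX : Measurable X)
    (hlaw : HasDensityInP d (P.map X) ∨ HasDensityInPplus d (P.map X)) :
    ∃ C > (0:ℝ), ∀ ε ∈ Set.Ioo (-(1/2) : ℝ) (1/2),
      1 - C * ε ^ 2 ≤ hellingerAffinity (P.map X) (P.map fun ω => (1 + ε)⁻¹ • X ω) := by
  obtain ⟨C, hC, h⟩ := stmt3_general hX.aemeasurable
    (hlaw.elim HasDensityInP.hasTemperedDensity HasDensityInPplus.hasTemperedDensity)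
  exact ⟨C, hC, fun ε hε => h ε (by linarith [hε.1])⟩
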